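/- Let 1 < α ≤ 3/2 and define z(x) = (1 + (α−1)x²)/(1+x²)^{2−α} for x ∈ ℝ. Then z attains its minimum over ℝ at x̄ = ±√(3−2α)/(α−1) when 1 < α < 3/2 (and at x̄ = 0 when α = 3/2), and consequently z(x) ≥ ((α−1)/(2−α))^{3−2α} for all x ∈ ℝ; moreover for α ≥ 3/2 (with α ≤ 2) one has z(x) ≥ 1 for all x ∈ ℝ. -/

import Mathlib

open Real

/-- The even rational function `z(x) = (1 + (α−1)x²)/(1+x²)^{2−α}` arising as
the `x`-dependent factor of `W''(y) = α(1+2λ) z(x(y))` in the Bakry–Émery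
analysis of the Cauchy-type Fokker–Planck equation. -/
noncomputable def zfun (α x : ℝ) : ℝ :=
  (1 + (α - 1) * x ^ 2) / (1 + x ^ 2) ^ (2 - α)

/-!
Put `t = 1 + x²`, so that `z(x)` is an affine function of `t` divided by `t ^ (2 - α)`. At a point
`y` with `(α - 1)² y² = 3 - 2α` the numerator is a multiple of the tangent line of `t ^ (2 - α)` at
`t = 1 + y²`. By Bernoulli's inequality this power lies below its tangent when `1 < α` and above it
when `α < 1`; the multiple has the sign of `α - 1`, so `y` is a minimum of `z` either way.
-/

theorem rpow_div_rpow_le_tangent {s t p : ℝ} (hs : 0 < s) (ht : 0 ≤ t) (hp0 : 0 ≤ p)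
    (hp1 : p ≤ 1) : t ^ p / s ^ p ≤ 1 + p * (t / s - 1) := by
  have hts : 0 ≤ t / s := by positivity
  simpa only [add_sub_cancel, div_rpow ht hs.le] using
    rpow_one_add_le_one_add_mul_self (s := t / s - 1) (by linarith) hp0 hp1

theorem tangent_le_rpow_div_rpow {s t p : ℝ} (hs : 0 < s) (ht : 0 ≤ t) (hp : 1 ≤ p) :
    1 + p * (t / s - 1) ≤ t ^ p / s ^ p := by
  have hts : 0 ≤ t / s := by positivity
  simpa only [add_sub_cancel, div_rpow ht hs.le] using
    one_add_mul_self_le_rpow_one_add (s := t / s - 1) (by linarith) hp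

/-- The nontrivial factor of `z'(y) = 2y ((α - 1)² y² - (3 - 2α)) / (1 + y²) ^ (3 - α)` vanishes
at `y`. Besides the critical points `y ≠ 0` of `z`, this admits `y = 0` when `α = 3 / 2`. -/
abbrev ZfunCritical (α y : ℝ) : Prop :=
  (α - 1) ^ 2 * y ^ 2 = 3 - 2 * α

namespace ZfunCritical

variable {α y : ℝ}

theorem ne_one (hy : ZfunCritical α y) : α ≠ 1 := by
  rintro rfl
  norm_num [ZfunCritical] at hy

theorem le_three_halves (hy : ZfunCritical α y) : α ≤ 3 / 2 := by
  have h : 0 ≤ (α - 1) ^ 2 * y ^ 2 := by positivity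
  linarith

theorem numerator_eq (hy : ZfunCritical α y) : 1 + (α - 1) * y ^ 2 = (2 - α) / (α - 1) := by
  rw [eq_div_iff (sub_ne_zero.2 hy.ne_one)]
  linear_combination hy

theorem one_add_sq_eq (hy : ZfunCritical α y) : 1 + y ^ 2 = ((2 - α) / (α - 1)) ^ 2 := by
  have hα := sub_ne_zero.2 hy.ne_one
  rw [div_pow, eq_div_iff (pow_ne_zero 2 hα)]
  linear_combination hy

theorem numerator_eq_mul_tangent (hy : ZfunCritical α y) (x : ℝ) :
    1 + (α - 1) * x ^ 2 =
      (1 + (α - 1) * y ^ 2) * (1 + (2 - α) * ((1 + x ^ 2) / (1 + y ^ 2) - 1)) := by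
  have hs : 1 + y ^ 2 ≠ 0 := by positivity
  have slope : (2 - α) * (1 + (α - 1) * y ^ 2) = (α - 1) * (1 + y ^ 2) := by
    linear_combination -hy
  field_simp
  linear_combination (y ^ 2 - x ^ 2) * slope

theorem zfun_le (hy : ZfunCritical α y) (x : ℝ) : zfun α y ≤ zfun α x := by
  have hα : α ≤ 3 / 2 := hy.le_three_halves
  have hs : 0 < 1 + y ^ 2 := by positivity
  have ht : 0 < 1 + x ^ 2 := by positivity
  suffices h : (1 + (α - 1) * y ^ 2) * ((1 + x ^ 2) ^ (2 - α) / (1 + y ^ 2) ^ (2 - α)) ≤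
      1 + (α - 1) * x ^ 2 by
    rw [zfun, zfun, le_div_iff₀ (rpow_pos_of_pos ht _)]
    rwa [div_mul_eq_mul_div, mul_div_assoc]
  rw [hy.numerator_eq_mul_tangent x, hy.numerator_eq]
  rcases hy.ne_one.lt_or_gt with hlt | hgt
  · exact mul_le_mul_of_nonpos_left (tangent_le_rpow_div_rpow hs ht.le (by linarith))
      (div_nonpos_of_nonneg_of_nonpos (by linarith) (by linarith))
  · exact mul_le_mul_of_nonneg_left
      (rpow_div_rpow_le_tangent hs ht.le (by linarith) (by linarith))
      (div_nonneg (by linarith) (by linarith))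

theorem zfun_eq (hy : ZfunCritical α y) (hα : 1 < α) :
    zfun α y = ((α - 1) / (2 - α)) ^ (3 - 2 * α) := by
  have hα' : α ≤ 3 / 2 := hy.le_three_halves
  rw [zfun, hy.numerator_eq, hy.one_add_sq_eq, ← inv_div (α - 1) (2 - α)]
  set r := (α - 1) / (2 - α)
  have hr : 0 < r := div_pos (by linarith) (by linarith)
  calc r⁻¹ / (r⁻¹ ^ 2) ^ (2 - α) = r ^ (2 * (2 - α)) / r := by
        rw [← rpow_natCast_mul (by positivity), inv_rpow hr.le, div_inv_eq_mul, inv_mul_eq_div,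
          Nat.cast_ofNat]
    _ = r ^ (2 * (2 - α) - 1) := (rpow_sub_one hr.ne' _).symm
    _ = r ^ (3 - 2 * α) := by ring_nf

end ZfunCritical

theorem zfunCritical_sqrt_div {α : ℝ} (hα1 : α ≠ 1) (hα : α ≤ 3 / 2) :
    ZfunCritical α (√(3 - 2 * α) / (α - 1)) := by
  rw [ZfunCritical, ← mul_pow, mul_div_cancel₀ _ (sub_ne_zero.2 hα1), sq_sqrt (by linarith)]

theorem zfun_neg (α x : ℝ) : zfun α (-x) = zfun α x := by
  simp only [zfun, neg_sq]

theorem zfun_zero (α : ℝ) : zfun α 0 = 1 := by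
  simp [zfun]

theorem one_le_zfun {α : ℝ} (hα : 3 / 2 ≤ α) (x : ℝ) : 1 ≤ zfun α x := by
  have hx : 0 ≤ x ^ 2 := sq_nonneg x
  rw [zfun, one_le_div₀ (by positivity)]
  calc (1 + x ^ 2) ^ (2 - α) ≤ (1 + x ^ 2) ^ (1 / 2 : ℝ) :=
        rpow_le_rpow_of_exponent_le (by linarith) (by linarith)
    _ ≤ 1 + 1 / 2 * x ^ 2 :=
        rpow_one_add_le_one_add_mul_self (by linarith) (by norm_num) (by norm_num)
    _ ≤ 1 + (α - 1) * x ^ 2 := by gcongr; linarith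

theorem zfun_lower_bounds_general (α : ℝ) :
    (α ≠ 1 → α < 3 / 2 →
        ∀ x : ℝ, zfun α (√(3 - 2 * α) / (α - 1)) ≤ zfun α x ∧
          zfun α (-(√(3 - 2 * α) / (α - 1))) ≤ zfun α x) ∧
      (3 / 2 ≤ α → ∀ x : ℝ, zfun α 0 ≤ zfun α x) ∧
      (1 < α → α ≤ 3 / 2 → ∀ x : ℝ, ((α - 1) / (2 - α)) ^ (3 - 2 * α) ≤ zfun α x) ∧
      (3 / 2 ≤ α → ∀ x : ℝ, 1 ≤ zfun α x) := by
  refine ⟨fun hα1 hα x => ?_, fun hα x => ?_, fun hα1 hα x => ?_, one_le_zfun⟩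
  · rw [zfun_neg, and_self]
    exact (zfunCritical_sqrt_div hα1 hα.le).zfun_le x
  · rw [zfun_zero]
    exact one_le_zfun hα x
  · have hy := zfunCritical_sqrt_div hα1.ne' hα
    rw [← hy.zfun_eq hα1]
    exact hy.zfun_le x

/-- **Lower bound for the convexity factor `z`** (minimization of `z` in the
proof of Theorem 3.1). Let `1 < α ≤ 2` and `z(x) = (1+(α−1)x²)/(1+x²)^{2−α}`.
If `1 < α < 3/2` then `z` attains its minimum over `ℝ` at
`x = ±√(3−2α)/(α−1)`, while for `α = 3/2` it attains its minimum at `x = 0`;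
consequently, for `1 < α ≤ 3/2`, `z(x) ≥ ((α−1)/(2−α))^{3−2α}` for all `x ∈ ℝ`.
Moreover, for `3/2 ≤ α ≤ 2`, `z(x) ≥ 1` for all `x ∈ ℝ`. -/
theorem zfun_lower_bounds (α : ℝ) (hα1 : 1 < α) (hα2 : α ≤ 2) :
    (α < 3 / 2 →
        ∀ x : ℝ, zfun α (Real.sqrt (3 - 2 * α) / (α - 1)) ≤ zfun α x ∧
          zfun α (-(Real.sqrt (3 - 2 * α) / (α - 1))) ≤ zfun α x) ∧
      (α = 3 / 2 → ∀ x : ℝ, zfun α 0 ≤ zfun α x) ∧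
      (α ≤ 3 / 2 → ∀ x : ℝ, ((α - 1) / (2 - α)) ^ (3 - 2 * α) ≤ zfun α x) ∧
      (3 / 2 ≤ α → ∀ x : ℝ, 1 ≤ zfun α x) := by
  obtain ⟨hcrit, hzero, hbound, hone⟩ := zfun_lower_bounds_general α
  exact ⟨hcrit hα1.ne', fun h => hzero h.ge, hbound hα1, hone⟩
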